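/- Let f : ℝ → ℝ be continuously differentiable and let u : ℝ^N → ℝ be C³ with Δu + f(u) = 0 on ℝ^N and DV ≡ 0 on U = {x : ∇u(x) ≠ 0}, where V = ∇u/‖∇u‖. Let w ∈ ℝ^N with ‖w‖ = 1, p ∈ ℝ^N, γ(t) = p + t w, and h = u ∘ γ, and assume h is nonconstant on ℝ. Let (a, b) be a connected component of {t ∈ ℝ : γ(t) ∈ U}, and assume a ∈ ℝ is finite. Then q = γ(a) is a critical point of u (∇u(q) = 0), f(u(q)) ≠ 0, and consequently Δu(q) ≠ 0 and Hess u(q) ≠ 0. -/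

import Mathlib

open RealInnerProductSpace MeasureTheory Filter

/-- The Hessian bilinear form of `u : ℝ^N → ℝ` at `x`, applied to `w₁, w₂`. -/
noncomputable def Hess {N : ℕ} (u : EuclideanSpace ℝ (Fin N) → ℝ)
    (x w₁ w₂ : EuclideanSpace ℝ (Fin N)) : ℝ :=
  fderiv ℝ (fun y => fderiv ℝ u y w₁) x w₂

/-- The Laplacian `Δu = tr Hess u`. -/
noncomputable def Lap {N : ℕ} (u : EuclideanSpace ℝ (Fin N) → ℝ)
    (x : EuclideanSpace ℝ (Fin N)) : ℝ :=
  ∑ i : Fin N, Hess u x (EuclideanSpace.single i 1) (EuclideanSpace.single i 1)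

/-- The normalized gradient `V = ∇u / ‖∇u‖` (junk value `0` where `∇u = 0`). -/
noncomputable def NGrad {N : ℕ} (u : EuclideanSpace ℝ (Fin N) → ℝ)
    (x : EuclideanSpace ℝ (Fin N)) : EuclideanSpace ℝ (Fin N) :=
  ‖gradient u x‖⁻¹ • gradient u x

/-- The squared Frobenius norm of a linear map on `ℝ^N`. -/
noncomputable def FrobSq {N : ℕ}
    (A : EuclideanSpace ℝ (Fin N) →L[ℝ] EuclideanSpace ℝ (Fin N)) : ℝ :=
  ∑ i : Fin N, ‖A (EuclideanSpace.single i 1)‖ ^ 2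

/-- The divergence `div Z = ∑ i ∂Zᵢ/∂xᵢ` of a vector field on `ℝ^N`. -/
noncomputable def Divg {N : ℕ} (Z : EuclideanSpace ℝ (Fin N) → EuclideanSpace ℝ (Fin N))
    (x : EuclideanSpace ℝ (Fin N)) : ℝ :=
  ∑ i : Fin N, ⟪fderiv ℝ Z x (EuclideanSpace.single i 1), EuclideanSpace.single i 1⟫

/-- The Frobenius inner product `⟨A, B⟩_F = ∑ᵢⱼ Aᵢⱼ Bᵢⱼ` of two linear maps on `ℝ^N`. -/
noncomputable def FrobInner {N : ℕ}
    (A B : EuclideanSpace ℝ (Fin N) →L[ℝ] EuclideanSpace ℝ (Fin N)) : ℝ :=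
  ∑ i : Fin N, ⟪A (EuclideanSpace.single i 1), B (EuclideanSpace.single i 1)⟫

lemma grad_contDiff {N : ℕ} (u : EuclideanSpace ℝ (Fin N) → ℝ) (hu : ContDiff ℝ 3 u) :
    ContDiff ℝ 2 (gradient u) := by
  have h1 : ContDiff ℝ 2 (fderiv ℝ u) := hu.fderiv_right (by norm_num)
  exact (InnerProductSpace.toDual ℝ (EuclideanSpace ℝ (Fin N))).symm.contDiff.comp h1

lemma inner_grad {N : ℕ} (u : EuclideanSpace ℝ (Fin N) → ℝ)
    (x y : EuclideanSpace ℝ (Fin N)) : ⟪gradient u x, y⟫ = fderiv ℝ u x y := by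
  simp [gradient]

lemma inner_fderiv_grad {N : ℕ} (u : EuclideanSpace ℝ (Fin N) → ℝ) (hu : ContDiff ℝ 3 u)
    (x y z : EuclideanSpace ℝ (Fin N)) :
    ⟪fderiv ℝ (gradient u) x y, z⟫ = fderiv ℝ (fun y => fderiv ℝ u y z) x y := by
  have h1 : DifferentiableAt ℝ (gradient u) x :=
    ((grad_contDiff u hu).differentiable (by norm_num)) x
  have h2 : HasFDerivAt (fun y => ⟪gradient u y, z⟫) _ x :=
    h1.hasFDerivAt.inner ℝ (hasFDerivAt_const z x)
  have h3 : (fun y => ⟪gradient u y, z⟫) = fun y => fderiv ℝ u y z := by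
    funext y; exact inner_grad u y z
  rw [h3] at h2
  rw [h2.fderiv]
  simp

lemma fderiv_grad_symm {N : ℕ} (u : EuclideanSpace ℝ (Fin N) → ℝ) (hu : ContDiff ℝ 3 u)
    (x y z : EuclideanSpace ℝ (Fin N)) :
    ⟪fderiv ℝ (gradient u) x y, z⟫ = ⟪fderiv ℝ (gradient u) x z, y⟫ := by
  rw [inner_fderiv_grad u hu, inner_fderiv_grad u hu]
  have h1 : ContDiff ℝ 2 (fderiv ℝ u) := hu.fderiv_right (by norm_num)
  have h2 : DifferentiableAt ℝ (fderiv ℝ u) x := (h1.differentiable (by norm_num)) x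
  have h3 : IsSymmSndFDerivAt ℝ u x := hu.contDiffAt.isSymmSndFDerivAt (by simp; norm_num)
  rw [fderiv_clm_apply h2 (by fun_prop), fderiv_clm_apply h2 (by fun_prop)]
  simpa using h3 y z

lemma lap_eq {N : ℕ} (u : EuclideanSpace ℝ (Fin N) → ℝ) (hu : ContDiff ℝ 3 u)
    (x : EuclideanSpace ℝ (Fin N)) :
    Lap u x = ∑ i : Fin N, ⟪fderiv ℝ (gradient u) x (EuclideanSpace.single i 1),
      EuclideanSpace.single i (1 : ℝ)⟫ := by
  unfold Lap Hess
  exact Finset.sum_congr rfl fun i _ => (inner_fderiv_grad u hu _ _ _).symm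

lemma ngrad_diff {N : ℕ} (u : EuclideanSpace ℝ (Fin N) → ℝ) (hu : ContDiff ℝ 3 u)
    (x : EuclideanSpace ℝ (Fin N)) (hx : gradient u x ≠ 0) :
    DifferentiableAt ℝ (NGrad u) x := by
  have h1 : DifferentiableAt ℝ (gradient u) x :=
    ((grad_contDiff u hu).differentiable (by norm_num)) x
  exact ((h1.norm ℝ hx).inv (norm_ne_zero_iff.2 hx)).smul h1

lemma norm_smul_ngrad {N : ℕ} (u : EuclideanSpace ℝ (Fin N) → ℝ)
    (x : EuclideanSpace ℝ (Fin N)) : ‖gradient u x‖ • NGrad u x = gradient u x := by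
  unfold NGrad
  by_cases hx : gradient u x = 0
  · simp [hx]
  · rw [smul_smul, mul_inv_cancel₀ (norm_ne_zero_iff.2 hx), one_smul]

lemma ngrad_norm {N : ℕ} (u : EuclideanSpace ℝ (Fin N) → ℝ)
    (x : EuclideanSpace ℝ (Fin N)) (hx : gradient u x ≠ 0) : ‖NGrad u x‖ = 1 := by
  unfold NGrad
  rw [norm_smul, norm_inv, norm_norm, inv_mul_cancel₀ (norm_ne_zero_iff.2 hx)]

lemma key {N : ℕ} (u : EuclideanSpace ℝ (Fin N) → ℝ) (hu : ContDiff ℝ 3 u)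
    (x : EuclideanSpace ℝ (Fin N)) (hx : gradient u x ≠ 0)
    (hDV : fderiv ℝ (NGrad u) x = 0) (w : EuclideanSpace ℝ (Fin N)) :
    ⟪fderiv ℝ (gradient u) x w, NGrad u x⟫ = Lap u x * ⟪NGrad u x, w⟫ := by
  have h1 : DifferentiableAt ℝ (gradient u) x :=
    ((grad_contDiff u hu).differentiable (by norm_num)) x
  obtain ⟨l, hl⟩ : ∃ l : EuclideanSpace ℝ (Fin N) →L[ℝ] ℝ,
      ∀ y, fderiv ℝ (gradient u) x y = l y • NGrad u x := by
    refine ⟨fderiv ℝ (fun y => ‖gradient u y‖) x, fun y => ?_⟩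
    have h2 := (h1.norm ℝ hx).hasFDerivAt.smul (ngrad_diff u hu x hx).hasFDerivAt
    have h3 : ((fun y => ‖gradient u y‖) • NGrad u) = gradient u :=
      funext fun y => norm_smul_ngrad u y
    have h4 := h2.congr_of_eventuallyEq
      (Filter.Eventually.of_forall fun y => (norm_smul_ngrad u y).symm)
    rw [h4.fderiv, hDV]
    simp
  have hV := ngrad_norm u x hx
  set V := NGrad u x with hVdef
  have hVV : ⟪V, V⟫ = 1 := by rw [real_inner_self_eq_norm_sq, hV]; norm_num
  have hs : ∀ y, l y = l V * ⟪V, y⟫ := by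
    intro y
    have := fderiv_grad_symm u hu x y V
    rw [hl, hl, inner_smul_left, inner_smul_left, hVV] at this
    simpa using this
  have hL : Lap u x = l V := by
    rw [lap_eq u hu]
    have e : V = ∑ i, V i • EuclideanSpace.single i (1 : ℝ) := by
      ext j; simp [Finset.sum_apply, Pi.single_apply]
    conv_rhs => rw [e]
    rw [map_sum]
    refine Finset.sum_congr rfl fun i _ => ?_
    rw [hl, inner_smul_left]
    simp [EuclideanSpace.inner_single_right, mul_comm]
  rw [hl, inner_smul_left, hVV, hL]
  simpa using hs w

lemma ode_zero (f : ℝ → ℝ) (hf : ContDiff ℝ 1 f) (k a c : ℝ) (h m : ℝ → ℝ) (hac : a ≤ c)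
    (hh : ∀ t, HasDerivAt h (deriv h t) t) (hm : ∀ t, HasDerivAt m (deriv m t) t)
    (h1 : ∀ t ∈ Set.Icc a c, deriv h t = k * m t)
    (h2 : ∀ t ∈ Set.Icc a c, deriv m t = -k * f (h t))
    (hma : m a = 0) (hfa : f (h a) = 0) : m c = 0 := by
  let F : ℝ × ℝ → ℝ × ℝ := fun z => (k * z.2, -k * f z.1)
  have hF : ContDiff ℝ 1 F := by
    apply ContDiff.prodMk
    · fun_prop
    · exact contDiff_const.mul (hf.comp contDiff_fst)
  have hz : ∀ t, HasDerivAt (fun t => (h t, m t)) (deriv h t, deriv m t) t :=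
    fun t => (hh t).prodMk (hm t)
  have hzc : Continuous (fun t => (h t, m t)) :=
    continuous_iff_continuousAt.2 fun t => (hz t).continuousAt
  let s : Set (ℝ × ℝ) := (fun t => (h t, m t)) '' Set.Icc a c
  have hs : IsCompact s := isCompact_Icc.image hzc
  obtain ⟨K, hK⟩ := hF.locallyLipschitz.locallyLipschitzOn.exists_lipschitzOnWith_of_compact hs
  have := ODE_solution_unique_of_mem_Icc_right (v := fun _ => F) (s := fun _ => s) (K := K)
    (f := fun t => (h t, m t)) (g := fun _ => (h a, m a)) (a := a) (b := c)
    (fun _ _ => hK) hzc.continuousOn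
    (fun t ht => by
      have := (hz t).hasDerivWithinAt (s := Set.Ici t)
      rw [h1 t ⟨ht.1, ht.2.le⟩, h2 t ⟨ht.1, ht.2.le⟩] at this
      exact this)
    (fun t ht => ⟨t, ⟨ht.1, ht.2.le⟩, rfl⟩) continuousOn_const
    (fun t ht => by
      have : F (h a, m a) = 0 := by simp [F, hma, hfa]
      simp only [this]
      exact hasDerivWithinAt_const _ _ _)
    (fun t ht => ⟨a, ⟨le_rfl, hac⟩, rfl⟩) rfl
  have := this (Set.right_mem_Icc.2 hac)
  simpa [hma] using congrArg Prod.snd this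

/-- flat-space instance of Lemma 3.5(b). If a connected component of
`{t | γ(t) ∈ U}` is `(a, b)` with finite left endpoint `a`, then `q = γ(a)` is a critical
point of `u`, `f(u(q)) ≠ 0`, and consequently `Δu(q) ≠ 0` and `Hess u(q) ≠ 0`. -/
theorem statement13 {N : ℕ} (hN : 1 ≤ N) (f : ℝ → ℝ) (hf : ContDiff ℝ 1 f)
    (u : EuclideanSpace ℝ (Fin N) → ℝ) (hu : ContDiff ℝ 3 u)
    (hpde : ∀ x, Lap u x + f (u x) = 0)
    (hDV : ∀ x, gradient u x ≠ 0 → fderiv ℝ (NGrad u) x = 0)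
    (w p : EuclideanSpace ℝ (Fin N)) (hw : ‖w‖ = 1)
    (γ : ℝ → EuclideanSpace ℝ (Fin N)) (hγ : γ = fun t => p + t • w)
    (h : ℝ → ℝ) (hh : h = u ∘ γ)
    (hnc : ∃ s t, h s ≠ h t)
    (t₀ : ℝ) (ht₀ : gradient u (γ t₀) ≠ 0)
    (a : ℝ) (b : EReal) (hab : (a : EReal) < b)
    (hcomp : connectedComponentIn {t : ℝ | gradient u (γ t) ≠ 0} t₀ =
      {t : ℝ | (a : EReal) < (t : EReal) ∧ (t : EReal) < b}) :
    gradient u (γ a) = 0 ∧ f (u (γ a)) ≠ 0 ∧ Lap u (γ a) ≠ 0 ∧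
      fderiv ℝ (gradient u) (γ a) ≠ 0 := by
  have hγd : ∀ t, HasDerivAt γ w t := by
    intro t
    rw [hγ]
    simpa using ((hasDerivAt_id t).smul_const w).const_add p
  have hγc : Continuous γ := continuous_iff_continuousAt.2 fun t => (hγd t).continuousAt
  have hgC := grad_contDiff u hu
  have hgd : Differentiable ℝ (gradient u) := hgC.differentiable (by norm_num)
  have hmem : t₀ ∈ connectedComponentIn {t : ℝ | gradient u (γ t) ≠ 0} t₀ :=
    mem_connectedComponentIn ht₀
  have hmem' := hmem
  rw [hcomp] at hmem'
  have hat : a < t₀ := by exact_mod_cast hmem'.1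
  have hU : ∀ t ∈ Set.Ioc a t₀, gradient u (γ t) ≠ 0 := by
    intro t ht
    have : t ∈ connectedComponentIn {t : ℝ | gradient u (γ t) ≠ 0} t₀ := by
      rw [hcomp]
      exact ⟨by exact_mod_cast ht.1, lt_of_le_of_lt (by exact_mod_cast ht.2) hmem'.2⟩
    exact connectedComponentIn_subset _ _ this
  have hga : gradient u (γ a) = 0 := by
    by_contra hne
    have hsub : Set.Icc a t₀ ⊆ {t : ℝ | gradient u (γ t) ≠ 0} := by
      intro t ht
      rcases ht.1.eq_or_lt with h0 | h0
      · rw [← h0]; exact hne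
      · exact hU t ⟨h0, ht.2⟩
    have := isPreconnected_Icc.subset_connectedComponentIn (Set.right_mem_Icc.2 hat.le) hsub
      (Set.left_mem_Icc.2 hat.le)
    rw [hcomp] at this
    exact lt_irrefl _ this.1
  have hfa : f (u (γ a)) ≠ 0 := by
    intro hf0
    set v := NGrad u (γ t₀) with hv
    have hVc : ∀ t ∈ Set.Ioc a t₀, NGrad u (γ t) = v := by
      intro t ht
      have hd : ∀ s ∈ Set.Icc t t₀, HasDerivAt (fun s => NGrad u (γ s)) 0 s := by
        intro s hs
        have hsU := hU s ⟨ht.1.trans_le hs.1, hs.2⟩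
        have h1 := (ngrad_diff u hu _ hsU).hasFDerivAt.comp_hasDerivAt s (hγd s)
        rw [hDV _ hsU] at h1
        simpa using! h1
      exact (constant_of_has_deriv_right_zero
        (fun s hs => (hd s hs).continuousAt.continuousWithinAt)
        (fun s hs => (hd s ⟨hs.1, hs.2.le⟩).hasDerivWithinAt) t₀
        (Set.right_mem_Icc.2 ht.2)).symm
    have hvn : ‖v‖ = 1 := ngrad_norm u _ ht₀
    have hvv : ⟪v, v⟫ = 1 := by rw [real_inner_self_eq_norm_sq, hvn]; norm_num
    let m : ℝ → ℝ := fun t => ⟪gradient u (γ t), v⟫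
    have hmd : ∀ t, HasDerivAt m ⟪fderiv ℝ (gradient u) (γ t) w, v⟫ t := by
      intro t
      have h1 := (hgd (γ t)).hasFDerivAt.comp_hasDerivAt t (hγd t)
      have h2 := h1.inner ℝ (hasDerivAt_const t v)
      rw [inner_zero_right, zero_add] at h2
      exact h2
    have hhd : ∀ t, HasDerivAt h ⟪gradient u (γ t), w⟫ t := by
      intro t
      have h1 := ((hu.differentiable (by norm_num)) (γ t)).hasFDerivAt.comp_hasDerivAt t (hγd t)
      rw [hh, inner_grad]
      exact h1
    have hmG : ∀ t ∈ Set.Ioc a t₀, gradient u (γ t) = m t • v := by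
      intro t ht
      have h1 := norm_smul_ngrad u (γ t)
      rw [hVc t ht] at h1
      have h2 : m t = ‖gradient u (γ t)‖ := by
        simp only [m]
        conv_lhs => rw [← h1]
        rw [inner_smul_left, hvv]; simp
      rw [h2, h1]
    have hma : m a = 0 := by simp only [m, hga, inner_zero_left]
    have e2 : ∀ t ∈ Set.Ioc a t₀,
        ⟪fderiv ℝ (gradient u) (γ t) w, v⟫ = -⟪v, w⟫ * f (h t) := by
      intro t ht
      have h1 := key u hu (γ t) (hU t ht) (hDV _ (hU t ht)) w
      rw [hVc t ht] at h1
      rw [h1, hh]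
      have := hpde (γ t)
      simp only [Function.comp]
      linear_combination ⟪v, w⟫ * this
    have hhc : Continuous h := continuous_iff_continuousAt.2 fun t => (hhd t).continuousAt
    have hfc : Continuous (fderiv ℝ (gradient u)) := hgC.continuous_fderiv (by norm_num)
    have e2' : ∀ t ∈ Set.Icc a t₀,
        ⟪fderiv ℝ (gradient u) (γ t) w, v⟫ = -⟪v, w⟫ * f (h t) := by
      have h3 : Set.EqOn (fun t => ⟪fderiv ℝ (gradient u) (γ t) w, v⟫)
          (fun t => -⟪v, w⟫ * f (h t)) (Set.Ioc a t₀) := e2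
      have h4 := h3.closure
        (((hfc.comp hγc).clm_apply continuous_const).inner continuous_const)
        (continuous_const.mul (hf.continuous.comp hhc))
      rw [closure_Ioc hat.ne] at h4
      exact h4
    have e1 : ∀ t ∈ Set.Icc a t₀, ⟪gradient u (γ t), w⟫ = ⟪v, w⟫ * m t := by
      intro t ht
      rcases ht.1.eq_or_lt with h0 | h0
      · rw [← h0, hma, hga]; simp
      · rw [hmG t ⟨h0, ht.2⟩, inner_smul_left, mul_comm]; simp
    have hm0 : m t₀ = 0 := by
      refine ode_zero f hf ⟪v, w⟫ a t₀ h m hat.le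
        (fun t => (hhd t).differentiableAt.hasDerivAt)
        (fun t => (hmd t).differentiableAt.hasDerivAt) ?_ ?_ hma (by rw [hh]; exact hf0)
      · intro t ht; rw [(hhd t).deriv]; exact e1 t ht
      · intro t ht; rw [(hmd t).deriv]; exact e2' t ht
    apply ht₀
    rw [hmG t₀ ⟨hat, le_rfl⟩, hm0, zero_smul]
  have hL : Lap u (γ a) ≠ 0 := by
    intro h0
    have := hpde (γ a)
    rw [h0, zero_add] at this
    exact hfa this
  refine ⟨hga, hfa, hL, fun h0 => hL ?_⟩
  rw [lap_eq u hu, h0]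
  simp
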